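/- Let B > 0, a > 0, let b : ℝ → ℝ be bounded and measurable with support contained in [−a, a], set A(x) := ∫₀ˣ b(t) dt, a⁻ := A(−a), a⁺ := A(a), and assume a⁻ > a⁺ (equivalently ∫_{−a}^{a} b(x) dx < 0). Fix p₀ ≥ −a⁺ − aB. Then ∫_ℝ [ √(max(E − (p₀ + Bx + A(x))², 0)) − √(max(E − (p₀ + Bx + a⁻)², 0)) ] dx → +∞ as E → +∞. -/

import Mathlib

open MeasureTheory Filter

/-!
With `h = (A (-a) - A a) / B`, the momentum `p₀ + B x + A (-a)` of the shifted oscillator agrees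
with `p₀ + B x + A x` to the left of `-a`, and its translate by `h` agrees with it to the right of
`a`. Since integrals over half-lines are translation invariant, the two phase integrals differ only
by `∫ x in -a..a` of the first integrand minus `∫ x in -a..(a - h)` of the second. At high energy
both integrands are `√E + O(1)` on bounded intervals, so the difference is `h * √E + O(1)`.
-/

open Asymptotics Set

section ClassicalMomentum

/-- The magnitude `|ξ|` of a momentum on the energy surface `ξ ^ 2 + u ^ 2 = E`, extended by zero to
the classically forbidden region `E < u ^ 2`. The Bohr–Sommerfeld phase integral of
`-∂ₓ² + u(x) ^ 2` at energy `E` is the integral of `classicalMomentum E (u x)`. -/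
noncomputable def classicalMomentum (E u : ℝ) : ℝ :=
  √(max (E - u ^ 2) 0)

@[fun_prop]
lemma continuous_classicalMomentum (E : ℝ) : Continuous (classicalMomentum E) := by
  unfold classicalMomentum
  fun_prop

lemma classicalMomentum_eq_zero {E u : ℝ} (h : E ≤ u ^ 2) : classicalMomentum E u = 0 := by
  rw [classicalMomentum, max_eq_right (sub_nonpos.2 h), Real.sqrt_zero]

lemma classicalMomentum_le_sqrt (E u : ℝ) : classicalMomentum E u ≤ √E := by
  rcases le_total E (u ^ 2) with h | h
  · rw [classicalMomentum_eq_zero h]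
    exact Real.sqrt_nonneg E
  · rw [classicalMomentum, max_eq_left (sub_nonneg.2 h)]
    exact Real.sqrt_le_sqrt (sub_le_self E (sq_nonneg u))

lemma sqrt_le_classicalMomentum_add_abs (E u : ℝ) : √E ≤ classicalMomentum E u + |u| := by
  have hsq : classicalMomentum E u ^ 2 = max (E - u ^ 2) 0 := Real.sq_sqrt (le_max_right _ _)
  have hnonneg : 0 ≤ classicalMomentum E u := Real.sqrt_nonneg _
  refine Real.sqrt_le_iff.2 ⟨by positivity, ?_⟩
  calc E ≤ classicalMomentum E u ^ 2 + |u| ^ 2 := by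
        rw [hsq, sq_abs]
        linarith [le_max_left (E - u ^ 2) 0]
    _ ≤ (classicalMomentum E u + |u|) ^ 2 := pow_add_pow_le hnonneg (abs_nonneg u) two_ne_zero

lemma abs_classicalMomentum_sub_sqrt_le (E u : ℝ) : |classicalMomentum E u - √E| ≤ |u| := by
  rw [abs_sub_le_iff]
  constructor
  · linarith [classicalMomentum_le_sqrt E u, abs_nonneg u]
  · linarith [sqrt_le_classicalMomentum_add_abs E u]

lemma hasCompactSupport_classicalMomentum (E : ℝ) : HasCompactSupport (classicalMomentum E) :=
  HasCompactSupport.intro (isCompact_Icc (a := -√E) (b := √E)) fun u hu =>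
    classicalMomentum_eq_zero <| by
      contrapose! hu
      exact abs_le.1 (Real.abs_le_sqrt hu.le)

lemma integrable_classicalMomentum_comp {X : Type*} [TopologicalSpace X] [R1Space X]
    [MeasurableSpace X] [OpensMeasurableSpace X] {μ : Measure X} [IsFiniteMeasureOnCompacts μ]
    {u : X → ℝ} (hu : Continuous u) (hproper : Tendsto u (cocompact X) (cocompact ℝ)) (E : ℝ) :
    Integrable (fun x => classicalMomentum E (u x)) μ := by
  refine Continuous.integrable_of_hasCompactSupport (by fun_prop) ?_
  have hE := hasCompactSupport_classicalMomentum E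
  rw [hasCompactSupport_iff_eventuallyEq, coclosedCompact_eq_cocompact] at hE ⊢
  exact hproper.eventually hE

lemma isBigO_intervalIntegral_classicalMomentum_sub {u : ℝ → ℝ} (hu : Continuous u) (s t : ℝ)
    (L : Filter ℝ) :
    (fun E => (∫ x in s..t, classicalMomentum E (u x)) - (t - s) * √E)
      =O[L] (fun _ => (1 : ℝ)) := by
  refine isBigO_of_le' (c := abs (∫ x in s..t, |u x|)) L fun E => ?_
  have hint : IntervalIntegrable (fun x => classicalMomentum E (u x)) volume s t :=
    Continuous.intervalIntegrable (by fun_prop) s t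
  have hsplit : (∫ x in s..t, classicalMomentum E (u x)) - (t - s) * √E =
      ∫ x in s..t, (classicalMomentum E (u x) - √E) := by
    rw [intervalIntegral.integral_sub hint intervalIntegrable_const,
      intervalIntegral.integral_const, smul_eq_mul]
  rw [hsplit, norm_one, mul_one]
  exact intervalIntegral.norm_integral_le_abs_of_norm_le
    (ae_of_all _ fun x => abs_classicalMomentum_sub_sqrt_le E (u x))
    (hu.abs.intervalIntegrable s t)

end ClassicalMomentum

section Integrals

variable {V : Type*} [NormedAddCommGroup V] [NormedSpace ℝ V]

lemma integral_eq_integral_Iic_add_intervalIntegral_add_integral_Ioi {f : ℝ → V}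
    (hf : Integrable f) (l r : ℝ) :
    ∫ x, f x = (∫ x in Iic l, f x) + (∫ x in l..r, f x) + ∫ x in Ioi r, f x := by
  rw [add_assoc, intervalIntegral.integral_interval_add_Ioi hf.integrableOn hf.integrableOn,
    intervalIntegral.integral_Iic_add_Ioi hf.integrableOn hf.integrableOn]

lemma setIntegral_Ioi_comp_sub_right (g : ℝ → V) (r h : ℝ) :
    ∫ x in Ioi r, g (x - h) = ∫ x in Ioi (r - h), g x := by
  rw [← (measurePreserving_sub_right volume h).setIntegral_preimage_emb
    (measurableEmbedding_subRight h) g (Ioi (r - h)), preimage_sub_const_Ioi, sub_add_cancel]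

lemma integral_sub_eq_of_eqOn_Iic_of_eqOn_Ioi_translate {f g : ℝ → V} (hf : Integrable f)
    (hg : Integrable g) {l r h : ℝ} (hleft : EqOn f g (Iic l))
    (hright : EqOn f (fun x => g (x - h)) (Ioi r)) :
    ∫ x, (f x - g x) = (∫ x in l..r, f x) - ∫ x in l..(r - h), g x := by
  rw [integral_sub hf hg, integral_eq_integral_Iic_add_intervalIntegral_add_integral_Ioi hf l r,
    integral_eq_integral_Iic_add_intervalIntegral_add_integral_Ioi hg l (r - h),
    setIntegral_congr_fun measurableSet_Iic hleft, setIntegral_congr_fun measurableSet_Ioi hright,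
    setIntegral_Ioi_comp_sub_right]
  abel

lemma integral_primitive_eq_of_eqOn_zero {b A : ℝ → V} {c x y : ℝ}
    (hb : ∀ z w, IntervalIntegrable b volume z w) (hA : ∀ z, A z = ∫ t in c..z, b t)
    (hzero : EqOn b 0 (uIoo x y)) : A y = A x := by
  rw [← sub_eq_zero, hA, hA, intervalIntegral.integral_interval_sub_left (hb _ _) (hb _ _),
    intervalIntegral.integral_congr_uIoo hzero]
  exact intervalIntegral.integral_zero

end Integrals

section PhaseIntegrals

variable {B p l r α β : ℝ} {A : ℝ → ℝ}

lemma tendsto_affine_cocompact (hB : B ≠ 0) (c : ℝ) :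
    Tendsto (fun x => c + B * x) (cocompact ℝ) (cocompact ℝ) :=
  ((Homeomorph.mulLeft₀ B hB).trans (Homeomorph.addLeft c)).isClosedEmbedding.tendsto_cocompact

lemma tendsto_affine_add_cocompact (hB : B ≠ 0) (hl : ∀ x ≤ l, A x = α) (hr : ∀ x ≥ r, A x = β) :
    Tendsto (fun x => p + B * x + A x) (cocompact ℝ) (cocompact ℝ) := by
  rw [cocompact_eq_atBot_atTop, tendsto_sup, ← cocompact_eq_atBot_atTop]
  constructor
  · refine ((tendsto_affine_cocompact hB (p + α)).mono_left atBot_le_cocompact).congr' ?_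
    filter_upwards [eventually_le_atBot l] with x hx
    rw [hl x hx, add_right_comm]
  · refine ((tendsto_affine_cocompact hB (p + β)).mono_left atTop_le_cocompact).congr' ?_
    filter_upwards [eventually_ge_atTop r] with x hx
    rw [hr x hx, add_right_comm]

lemma integral_classicalMomentum_sub_eq (hB : B ≠ 0) (hA : Continuous A)
    (hl : ∀ x ≤ l, A x = α) (hr : ∀ x ≥ r, A x = β) (E : ℝ) :
    ∫ x, (classicalMomentum E (p + B * x + A x) - classicalMomentum E (p + B * x + α)) =
      (∫ x in l..r, classicalMomentum E (p + B * x + A x)) -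
        ∫ x in l..(r - (α - β) / B), classicalMomentum E (p + B * x + α) := by
  refine integral_sub_eq_of_eqOn_Iic_of_eqOn_Ioi_translate
    (integrable_classicalMomentum_comp (by fun_prop) (tendsto_affine_add_cocompact hB hl hr) E)
    (integrable_classicalMomentum_comp (by fun_prop)
      (tendsto_affine_add_cocompact (l := l) (r := r) hB (fun _ _ => rfl) fun _ _ => rfl) E)
    (fun x hx => ?_) (fun x hx => ?_)
  · simp only [hl x hx]
  · have hshift : p + B * x + β = p + B * (x - (α - β) / B) + α := by
      field_simp
      ring
    simp only [hr x (le_of_lt hx), hshift]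

lemma isBigO_integral_classicalMomentum_sub_sub (hB : B ≠ 0) (hA : Continuous A)
    (hl : ∀ x ≤ l, A x = α) (hr : ∀ x ≥ r, A x = β) (L : Filter ℝ) :
    (fun E =>
        (∫ x, (classicalMomentum E (p + B * x + A x) - classicalMomentum E (p + B * x + α))) -
          (α - β) / B * √E) =O[L] (fun _ => (1 : ℝ)) := by
  have hperturbed := isBigO_intervalIntegral_classicalMomentum_sub
    (u := fun x => p + B * x + A x) (by fun_prop) l r L
  have hoscillator := isBigO_intervalIntegral_classicalMomentum_sub
    (u := fun x => p + B * x + α) (by fun_prop) l (r - (α - β) / B) L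
  refine (hperturbed.sub hoscillator).congr_left fun E => ?_
  rw [integral_classicalMomentum_sub_eq hB hA hl hr]
  ring

lemma tendsto_integral_classicalMomentum_sub_atTop (hA : Continuous A)
    (hl : ∀ x ≤ l, A x = α) (hr : ∀ x ≥ r, A x = β) (hpos : 0 < (α - β) / B) :
    Tendsto (fun E =>
        ∫ x, (classicalMomentum E (p + B * x + A x) - classicalMomentum E (p + B * x + α)))
      atTop atTop := by
  have hB : B ≠ 0 := by
    rintro rfl
    simp at hpos
  have hsqrt : Tendsto (fun E => (α - β) / B * √E) atTop atTop :=
    Real.tendsto_sqrt_atTop.const_mul_atTop hpos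
  have hlittleO : (fun _ => (1 : ℝ)) =o[atTop] fun E => (α - β) / B * √E :=
    (isLittleO_one_left_iff ℝ).2 (tendsto_norm_atTop_atTop.comp hsqrt)
  exact IsEquivalent.tendsto_atTop (IsEquivalent.symm
    ((isBigO_integral_classicalMomentum_sub_sub hB hA hl hr atTop).trans_isLittleO hlittleO)) hsqrt

end PhaseIntegrals

theorem stmt_14_general {B a : ℝ} (hB : 0 < B) {b : ℝ → ℝ} (hb : Integrable b)
    (hb_supp : Function.support b ⊆ Icc (-a) a)
    {A : ℝ → ℝ} (hA : ∀ x : ℝ, A x = ∫ t in (0 : ℝ)..x, b t)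
    (hmean : A a < A (-a)) (p : ℝ) :
    Tendsto (fun E : ℝ =>
        ∫ x : ℝ,
          (Real.sqrt (max (E - (p + B * x + A x) ^ 2) 0) -
            Real.sqrt (max (E - (p + B * x + A (-a)) ^ 2) 0)))
      atTop atTop := by
  have hb_int (x y : ℝ) : IntervalIntegrable b volume x y := hb.intervalIntegrable
  have hA_cont : Continuous A := by
    rw [funext hA]
    exact intervalIntegral.continuous_primitive hb_int 0
  have hb_zero {x : ℝ} (hx : x ∉ Icc (-a) a) : b x = 0 :=
    Function.notMem_support.1 fun h => hx (hb_supp h)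
  have hleft (x : ℝ) (hx : x ≤ -a) : A x = A (-a) :=
    (integral_primitive_eq_of_eqOn_zero hb_int hA fun _ hy =>
      hb_zero fun h => h.1.not_gt (uIoo_of_le hx ▸ hy).2).symm
  have hright (x : ℝ) (hx : a ≤ x) : A x = A a :=
    integral_primitive_eq_of_eqOn_zero hb_int hA fun _ hy =>
      hb_zero fun h => h.2.not_gt (uIoo_of_le hx ▸ hy).1
  exact tendsto_integral_classicalMomentum_sub_atTop hA_cont hleft hright
    (div_pos (sub_pos.2 hmean) hB)

/-- Proposition 3.1 (analytic content): when the field variation has negative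
mean (a⁻ > a⁺) and p₀ ≥ −a⁺ − aB, the difference of Bohr–Sommerfeld phase
integrals diverges as E → ∞. -/
theorem stmt_14 (B a : ℝ) (hB : 0 < B) (ha : 0 < a)
    (b : ℝ → ℝ) (hb_meas : Measurable b) (hb_bd : ∃ M : ℝ, ∀ x : ℝ, |b x| ≤ M)
    (hb_supp : Function.support b ⊆ Set.Icc (-a) a)
    (A : ℝ → ℝ) (hA : ∀ x : ℝ, A x = ∫ t in (0 : ℝ)..x, b t)
    (hmean : A a < A (-a))
    (p₀ : ℝ) (hp₀ : -(A a) - a * B ≤ p₀) :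
    Tendsto (fun E : ℝ =>
        ∫ x : ℝ,
          (Real.sqrt (max (E - (p₀ + B * x + A x) ^ 2) 0) -
            Real.sqrt (max (E - (p₀ + B * x + A (-a)) ^ 2) 0)))
      atTop atTop := by
  obtain ⟨M, hM⟩ := hb_bd
  have hb : IntegrableOn b (Icc (-a) a) :=
    .of_bound measure_Icc_lt_top hb_meas.aestronglyMeasurable M (ae_of_all _ hM)
  exact stmt_14_general hB ((integrableOn_iff_integrable_of_support_subset hb_supp).1 hb)
    hb_supp hA hmean p₀
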